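/- Let A ∈ ℝ^{n×n} be nonsingular and 1 ≤ k < d(A). If (ĉ, v̂) ∈ ℝ^k × ℝ^n with ‖v̂‖ = 1 and d(A, v̂) ≥ k is a stationary point of F(c, v) = ‖p(A; c)v‖²/(vᵀv) (i.e., both partial derivatives of F vanish at (ĉ, v̂)), then p(·; ĉ) is the k-th GMRES polynomial of A and v̂, and F(ĉ, v̂) ≤ Ψ_k(A)². Consequently, a point (c̃, ṽ) ∈ ℝ^k × ℝ^n with ‖ṽ‖ = 1 solving the worst-case GMRES problem is a stationary point of F at which the maximal value of F among all stationary points is attained. -/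

import Mathlib

open Polynomial Matrix

/-- The Euclidean norm of a real vector. -/
noncomputable def euclNorm {ι : Type*} [Fintype ι] (v : ι → ℝ) : ℝ :=
  Real.sqrt (∑ i, v i ^ 2)

/-- The Euclidean norm of a complex vector. -/
noncomputable def euclNormC {ι : Type*} [Fintype ι] (v : ι → ℂ) : ℝ :=
  Real.sqrt (∑ i, ‖v i‖ ^ 2)

/-- The Euclidean inner product of two real vectors. -/
noncomputable def edot {ι : Type*} [Fintype ι] (u v : ι → ℝ) : ℝ := ∑ i, u i * v i

/-- `p ∈ π_k`: real polynomials of degree at most `k` with value `1` at the origin. -/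
def IsPik (k : ℕ) (p : Polynomial ℝ) : Prop := p.natDegree ≤ k ∧ p.eval 0 = 1

/-- `p ∈ π_{k,ℂ}`: complex polynomials of degree at most `k` with value `1` at the origin. -/
def IsPikC (k : ℕ) (p : Polynomial ℂ) : Prop := p.natDegree ≤ k ∧ p.eval 0 = 1

/-- The `k`-th GMRES residual norm `min_{p ∈ π_k} ‖p(A)v‖`. -/
noncomputable def gmresVal {ι : Type*} [Fintype ι] [DecidableEq ι]
    (A : Matrix ι ι ℝ) (k : ℕ) (v : ι → ℝ) : ℝ :=
  sInf {s : ℝ | ∃ p : Polynomial ℝ, IsPik k p ∧ s = euclNorm ((Polynomial.aeval A p).mulVec v)}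

/-- The `k`-th worst-case GMRES approximation `Ψ_k(A) = max_{‖v‖=1} min_{p ∈ π_k} ‖p(A)v‖`. -/
noncomputable def Psi {ι : Type*} [Fintype ι] [DecidableEq ι]
    (A : Matrix ι ι ℝ) (k : ℕ) : ℝ :=
  sSup {r : ℝ | ∃ v : ι → ℝ, euclNorm v = 1 ∧ r = gmresVal A k v}

/-- `d(A)`: the degree of the minimal polynomial of `A`. -/
noncomputable def dA {ι : Type*} [Fintype ι] [DecidableEq ι] (A : Matrix ι ι ℝ) : ℕ :=
  (minpoly ℝ A).natDegree

/-- `d(A,b)`: the smallest degree of a nonzero polynomial `q` with `q(A)b = 0`. -/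
noncomputable def dAb {ι : Type*} [Fintype ι] [DecidableEq ι]
    (A : Matrix ι ι ℝ) (b : ι → ℝ) : ℕ :=
  sInf {d : ℕ | ∃ q : Polynomial ℝ, q ≠ 0 ∧ q.natDegree = d ∧ (Polynomial.aeval A q).mulVec b = 0}

/-- `r = GMRES(A,b,k)`: `r = p(A)b` for some `p ∈ π_k` minimizing `‖p(A)b‖` over `π_k`. -/
def IsGmresRes {ι : Type*} [Fintype ι] [DecidableEq ι]
    (A : Matrix ι ι ℝ) (k : ℕ) (b r : ι → ℝ) : Prop :=
  ∃ p : Polynomial ℝ, IsPik k p ∧ r = (Polynomial.aeval A p).mulVec b ∧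
    ∀ q : Polynomial ℝ, IsPik k q → euclNorm r ≤ euclNorm ((Polynomial.aeval A q).mulVec b)

/-- `p` is the `k`-th GMRES polynomial of `A` and `b`: `p ∈ π_k` minimizes `‖p(A)b‖`. -/
def IsGmresPoly {ι : Type*} [Fintype ι] [DecidableEq ι]
    (A : Matrix ι ι ℝ) (k : ℕ) (b : ι → ℝ) (p : Polynomial ℝ) : Prop :=
  IsPik k p ∧ ∀ q : Polynomial ℝ, IsPik k q →
    euclNorm ((Polynomial.aeval A p).mulVec b) ≤ euclNorm ((Polynomial.aeval A q).mulVec b)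

/-- The Krylov subspace `K_k(A,b) = span{b, Ab, …, A^{k-1}b}`. -/
noncomputable def krylov {ι : Type*} [Fintype ι] [DecidableEq ι]
    (A : Matrix ι ι ℝ) (k : ℕ) (b : ι → ℝ) : Submodule ℝ (ι → ℝ) :=
  Submodule.span ℝ (Set.range fun i : Fin k => (A ^ (i : ℕ)).mulVec b)

/-- `b` satisfies the cross equality for `A` and step `k`. -/
def CrossEq {ι : Type*} [Fintype ι] [DecidableEq ι]
    (A : Matrix ι ι ℝ) (k : ℕ) (b : ι → ℝ) : Prop :=
  ∀ r s : ι → ℝ, IsGmresRes A k b r → IsGmresRes Aᵀ k ((euclNorm r)⁻¹ • r) s →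
    b = (euclNorm s)⁻¹ • s

/-- The Krylov matrix `K(v) = [Av, A²v, …, A^k v]`. -/
noncomputable def Kmat {n : ℕ} (A : Matrix (Fin n) (Fin n) ℝ) (k : ℕ) (v : Fin n → ℝ) :
    Matrix (Fin n) (Fin k) ℝ :=
  Matrix.of fun i j => (A ^ ((j : ℕ) + 1)).mulVec v i

/-- `γ(v) = (K(v)ᵀK(v))⁻¹ K(v)ᵀ v`. -/
noncomputable def gammaVec {n : ℕ} (A : Matrix (Fin n) (Fin n) ℝ) (k : ℕ) (v : Fin n → ℝ) :
    Fin k → ℝ :=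
  ((Kmat A k v)ᵀ * Kmat A k v)⁻¹ *ᵥ ((Kmat A k v)ᵀ *ᵥ v)

/-- `g(v) = min_{c ∈ ℝ^k} ‖v - K(v)c‖²`. -/
noncomputable def gFun {n : ℕ} (A : Matrix (Fin n) (Fin n) ℝ) (k : ℕ) (v : Fin n → ℝ) : ℝ :=
  sInf {s : ℝ | ∃ c : Fin k → ℝ, s = euclNorm (v - Kmat A k v *ᵥ c) ^ 2}

/-- `p(z; c) = 1 - ∑_{j=1}^k c_j z^j`. -/
noncomputable def pPoly {k : ℕ} (c : Fin k → ℝ) : Polynomial ℝ :=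
  1 - ∑ j : Fin k, Polynomial.C (c j) * Polynomial.X ^ ((j : ℕ) + 1)

/-- `f(c,v) = ‖p(A;c)v‖²`. -/
noncomputable def fFun {n k : ℕ} (A : Matrix (Fin n) (Fin n) ℝ) (c : Fin k → ℝ)
    (v : Fin n → ℝ) : ℝ :=
  euclNorm ((Polynomial.aeval A (pPoly c)).mulVec v) ^ 2

/-- `F(c,v) = f(c,v)/(vᵀv)`. -/
noncomputable def FFun {n k : ℕ} (A : Matrix (Fin n) (Fin n) ℝ) (c : Fin k → ℝ)
    (v : Fin n → ℝ) : ℝ :=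
  fFun A c v / edot v v

/-- The Toh matrix `A(ω, ε)`. -/
noncomputable def tohMatrix (ω ε : ℝ) : Matrix (Fin 4) (Fin 4) ℝ :=
  !![1, ε, 0, 0; 0, -1, ω / ε, 0; 0, 0, 1, ε; 0, 0, 0, -1]

/-- `p` is a `k`-th worst-case GMRES polynomial of `A`. -/
def IsWCPoly {ι : Type*} [Fintype ι] [DecidableEq ι]
    (A : Matrix ι ι ℝ) (k : ℕ) (p : Polynomial ℝ) : Prop :=
  IsPik k p ∧ ∃ b : ι → ℝ, euclNorm b = 1 ∧
    (∀ q : Polynomial ℝ, IsPik k q →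
      euclNorm ((Polynomial.aeval A p).mulVec b) ≤ euclNorm ((Polynomial.aeval A q).mulVec b)) ∧
    euclNorm ((Polynomial.aeval A p).mulVec b) = Psi A k

/-- The spectral (Euclidean operator) norm of a real matrix. -/
noncomputable def specNorm {ι : Type*} [Fintype ι] (M : Matrix ι ι ℝ) : ℝ :=
  sSup {r : ℝ | ∃ v : ι → ℝ, euclNorm v = 1 ∧ r = euclNorm (M *ᵥ v)}

/-- The `k`-th ideal GMRES approximation `φ_k(A) = min_{p ∈ π_k} ‖p(A)‖`. -/
noncomputable def phiIdeal {ι : Type*} [Fintype ι] [DecidableEq ι]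
    (A : Matrix ι ι ℝ) (k : ℕ) : ℝ :=
  sInf {r : ℝ | ∃ p : Polynomial ℝ, IsPik k p ∧ r = specNorm (Polynomial.aeval A p)}

/-- Complexification of a real matrix. -/
noncomputable def matC {ι : Type*} (A : Matrix ι ι ℝ) : Matrix ι ι ℂ :=
  A.map fun x => (x : ℂ)

/-- Complexification of a real vector. -/
noncomputable def vecC {ι : Type*} (b : ι → ℝ) : ι → ℂ := fun i => (b i : ℂ)

/-- `Ψ_{k,ℂ,ℝ}(A)`: complex polynomials, real initial vectors. -/
noncomputable def PsiCR {ι : Type*} [Fintype ι] [DecidableEq ι]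
    (A : Matrix ι ι ℝ) (k : ℕ) : ℝ :=
  sSup {r : ℝ | ∃ b : ι → ℝ, euclNorm b = 1 ∧
    r = sInf {s : ℝ | ∃ p : Polynomial ℂ, IsPikC k p ∧
      s = euclNormC ((Polynomial.aeval (matC A) p).mulVec (vecC b))}}

/-- `Ψ_{k,ℂ,ℂ}(A)`: complex polynomials, complex initial vectors. -/
noncomputable def PsiCC {ι : Type*} [Fintype ι] [DecidableEq ι]
    (A : Matrix ι ι ℝ) (k : ℕ) : ℝ :=
  sSup {r : ℝ | ∃ b : ι → ℂ, euclNormC b = 1 ∧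
    r = sInf {s : ℝ | ∃ p : Polynomial ℂ, IsPikC k p ∧
      s = euclNormC ((Polynomial.aeval (matC A) p).mulVec b)}}

/-- `Ψ_{k,ℝ,ℂ}(A)`: real polynomials, complex initial vectors. -/
noncomputable def PsiRC {ι : Type*} [Fintype ι] [DecidableEq ι]
    (A : Matrix ι ι ℝ) (k : ℕ) : ℝ :=
  sSup {r : ℝ | ∃ b : ι → ℂ, euclNormC b = 1 ∧
    r = sInf {s : ℝ | ∃ p : Polynomial ℝ, IsPik k p ∧
      s = euclNormC ((Polynomial.aeval (matC A) (p.map (algebraMap ℝ ℂ))).mulVec b)}}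

/-- `φ_{k,ℝ,ℝ}(A)`. -/
noncomputable def phiRR {ι : Type*} [Fintype ι] [DecidableEq ι]
    (A : Matrix ι ι ℝ) (k : ℕ) : ℝ :=
  sInf {r : ℝ | ∃ p : Polynomial ℝ, IsPik k p ∧
    r = sSup {s : ℝ | ∃ b : ι → ℝ, euclNorm b = 1 ∧
      s = euclNorm ((Polynomial.aeval A p).mulVec b)}}

/-- `φ_{k,ℂ,ℝ}(A)`. -/
noncomputable def phiCR {ι : Type*} [Fintype ι] [DecidableEq ι]
    (A : Matrix ι ι ℝ) (k : ℕ) : ℝ :=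
  sInf {r : ℝ | ∃ p : Polynomial ℂ, IsPikC k p ∧
    r = sSup {s : ℝ | ∃ b : ι → ℝ, euclNorm b = 1 ∧
      s = euclNormC ((Polynomial.aeval (matC A) p).mulVec (vecC b))}}

/-- `φ_{k,ℝ,ℂ}(A)`. -/
noncomputable def phiRC {ι : Type*} [Fintype ι] [DecidableEq ι]
    (A : Matrix ι ι ℝ) (k : ℕ) : ℝ :=
  sInf {r : ℝ | ∃ p : Polynomial ℝ, IsPik k p ∧
    r = sSup {s : ℝ | ∃ b : ι → ℂ, euclNormC b = 1 ∧
      s = euclNormC ((Polynomial.aeval (matC A) (p.map (algebraMap ℝ ℂ))).mulVec b)}}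

/-- `φ_{k,ℂ,ℂ}(A)`. -/
noncomputable def phiCC {ι : Type*} [Fintype ι] [DecidableEq ι]
    (A : Matrix ι ι ℝ) (k : ℕ) : ℝ :=
  sInf {r : ℝ | ∃ p : Polynomial ℂ, IsPikC k p ∧
    r = sSup {s : ℝ | ∃ b : ι → ℂ, euclNormC b = 1 ∧
      s = euclNormC ((Polynomial.aeval (matC A) p).mulVec b)}}

/-!
For fixed `v`, the map `c ↦ f(c, v) = ‖v - K(v)c‖²` is a linear least squares functional, so its
stationary points are its global minimizers; hence a stationary point of `F` is already a GMRES
solution, and its value is at most the worst-case one.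

For the converse let `(c̃, ṽ)` be a worst-case solution with `F(c̃, ṽ) > 0`. As `A` is nonsingular,
`K(ṽ)` has full column rank: a nontrivial relation between the columns would, after cancelling
powers of `A`, give some `p ∈ π_k` with `p(A)ṽ = 0`. So `γ` is differentiable near `ṽ`, where
`γ(v)` is the minimizer for `v`, and `v ↦ F(γ(v), v)` has a local maximum at `ṽ`. By the envelope
theorem, the gradient of this function at `ṽ` is the partial gradient of `F` with respect to `v`.
If instead `F(c̃, ṽ) = 0`, then `ṽ` minimizes the nonnegative function `F(c̃, ·)`.
-/

section Calculus

variable {𝕜 E C G : Type*} [NontriviallyNormedField 𝕜] [NormedAddCommGroup E] [NormedSpace 𝕜 E]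
  [NormedAddCommGroup C] [NormedSpace 𝕜 C] [NormedAddCommGroup G] [NormedSpace 𝕜 G]
  {m : Type*} [Fintype m] [DecidableEq m] {x : E}

theorem fderiv_envelope {Φ : C × E → G} {γ : E → C} (hΦ : DifferentiableAt 𝕜 Φ (γ x, x))
    (hγ : DifferentiableAt 𝕜 γ x) (hcrit : fderiv 𝕜 (fun c => Φ (c, x)) (γ x) = 0) :
    fderiv 𝕜 (fun y => Φ (γ y, y)) x = fderiv 𝕜 (fun y => Φ (γ x, y)) x := by
  have hleft : fderiv 𝕜 (fun c => Φ (c, x)) (γ x) =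
      (fderiv 𝕜 Φ (γ x, x)).comp (.inl 𝕜 C E) :=
    (hΦ.hasFDerivAt.comp (γ x) (hasFDerivAt_prodMk_left (γ x) x)).fderiv
  have hright : fderiv 𝕜 (fun y => Φ (γ x, y)) x =
      (fderiv 𝕜 Φ (γ x, x)).comp (.inr 𝕜 C E) :=
    (hΦ.hasFDerivAt.comp x (hasFDerivAt_prodMk_right (γ x) x)).fderiv
  have htotal : fderiv 𝕜 (fun y => Φ (γ y, y)) x =
      (fderiv 𝕜 Φ (γ x, x)).comp ((fderiv 𝕜 γ x).prod (.id 𝕜 E)) :=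
    HasFDerivAt.fderiv <|
      hΦ.hasFDerivAt.comp (f := fun y => (γ y, y)) x (hγ.hasFDerivAt.prodMk (hasFDerivAt_id x))
  ext h
  calc fderiv 𝕜 (fun y => Φ (γ y, y)) x h
      = fderiv 𝕜 Φ (γ x, x) (fderiv 𝕜 γ x h, 0) + fderiv 𝕜 Φ (γ x, x) (0, h) := by
        rw [htotal, ← map_add]; simp
    _ = fderiv 𝕜 (fun c => Φ (c, x)) (γ x) (fderiv 𝕜 γ x h) +
          fderiv 𝕜 (fun y => Φ (γ x, y)) x h := by rw [hleft, hright]; rfl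
    _ = fderiv 𝕜 (fun y => Φ (γ x, y)) x h := by rw [hcrit, _root_.zero_apply, zero_add]

theorem differentiableAt_det {M : E → Matrix m m 𝕜}
    (hM : ∀ i j, DifferentiableAt 𝕜 (fun y => M y i j) x) :
    DifferentiableAt 𝕜 (fun y => (M y).det) x := by
  simp only [det_apply]
  refine .fun_sum fun σ _ => DifferentiableAt.fun_const_smul ?_ _
  exact (HasFDerivAt.finsetProd fun i _ => (hM (σ i) i).hasFDerivAt).differentiableAt

theorem differentiableAt_inv_mulVec {M : E → Matrix m m 𝕜} {b : E → m → 𝕜}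
    (hM : ∀ i j, DifferentiableAt 𝕜 (fun y => M y i j) x) (hb : DifferentiableAt 𝕜 b x)
    (hdet : IsUnit (M x).det) : DifferentiableAt 𝕜 (fun y => (M y)⁻¹ *ᵥ b y) x := by
  have cramer_rule (y : E) (i : m) :
      ((M y)⁻¹ *ᵥ b y) i = (M y).det⁻¹ * ((M y).updateCol i (b y)).det := by
    rw [inv_def, Ring.inverse_eq_inv', smul_mulVec, ← cramer_eq_adjugate_mulVec, Pi.smul_apply,
      cramer_apply, smul_eq_mul]
  refine differentiableAt_pi.2 fun i => ?_
  simp only [cramer_rule]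
  refine ((differentiableAt_det hM).fun_inv hdet.ne_zero).fun_mul (differentiableAt_det ?_)
  intro j l
  simp only [updateCol_apply]
  split_ifs
  exacts [differentiableAt_pi.1 hb j, hM j l]

end Calculus

section EuclideanNorm

variable {ι : Type*} [Fintype ι]

theorem euclNorm_nonneg (v : ι → ℝ) : 0 ≤ euclNorm v := Real.sqrt_nonneg _

theorem euclNorm_sq (v : ι → ℝ) : euclNorm v ^ 2 = v ⬝ᵥ v := by
  rw [euclNorm, Real.sq_sqrt (Finset.sum_nonneg fun i _ => sq_nonneg (v i))]
  simp only [dotProduct, sq]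

theorem edot_self (v : ι → ℝ) : edot v v = euclNorm v ^ 2 := (euclNorm_sq v).symm

theorem euclNorm_eq_zero {v : ι → ℝ} : euclNorm v = 0 ↔ v = 0 := by
  rw [← sq_eq_zero_iff, euclNorm_sq, dotProduct_self_eq_zero]

theorem euclNorm_pos {v : ι → ℝ} : 0 < euclNorm v ↔ v ≠ 0 :=
  (euclNorm_nonneg v).lt_iff_ne'.trans euclNorm_eq_zero.not

theorem euclNorm_smul (a : ℝ) (v : ι → ℝ) : euclNorm (a • v) = |a| * euclNorm v := by
  rw [← sq_eq_sq₀ (euclNorm_nonneg _) (mul_nonneg (abs_nonneg a) (euclNorm_nonneg v))]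
  simp only [mul_pow, sq_abs, euclNorm_sq, smul_dotProduct, dotProduct_smul, smul_eq_mul]
  ring

theorem differentiable_euclNorm_sq : Differentiable ℝ fun v : ι → ℝ => euclNorm v ^ 2 := by
  simp only [euclNorm_sq, dotProduct]
  fun_prop

theorem ne_zero_of_euclNorm_eq_one {v : ι → ℝ} (hv : euclNorm v = 1) : v ≠ 0 :=
  euclNorm_pos.1 (hv ▸ one_pos)

end EuclideanNorm

section LeastSquares

variable {m n : Type*} [Fintype m] [Fintype n] (K : Matrix m n ℝ) (b : m → ℝ) {c : n → ℝ}

theorem euclNorm_sub_mulVec_add_smul_sq (c e : n → ℝ) (t : ℝ) :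
    euclNorm (b - K *ᵥ (c + t • e)) ^ 2 = euclNorm (b - K *ᵥ c) ^ 2
      - 2 * t * ((Kᵀ *ᵥ (b - K *ᵥ c)) ⬝ᵥ e) + t ^ 2 * euclNorm (K *ᵥ e) ^ 2 := by
  have hsplit : b - K *ᵥ (c + t • e) = (b - K *ᵥ c) - t • K *ᵥ e := by
    rw [mulVec_add, mulVec_smul, sub_sub]
  rw [hsplit, mulVec_transpose, ← dotProduct_mulVec]
  simp only [euclNorm_sq, sub_dotProduct _ (t • K *ᵥ e), dotProduct_sub _ _ (t • K *ᵥ e),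
    smul_dotProduct, dotProduct_smul, smul_eq_mul, dotProduct_comm (K *ᵥ e) (b - K *ᵥ c)]
  ring

variable {K b}

theorem euclNorm_sub_mulVec_sq_le (hc : Kᵀ *ᵥ (b - K *ᵥ c) = 0) (c' : n → ℝ) :
    euclNorm (b - K *ᵥ c) ^ 2 ≤ euclNorm (b - K *ᵥ c') ^ 2 := by
  have hexp := euclNorm_sub_mulVec_add_smul_sq K b c (c' - c) 1
  rw [hc, zero_dotProduct, one_smul, add_sub_cancel] at hexp
  linarith [sq_nonneg (euclNorm (K *ᵥ (c' - c)))]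

theorem normal_equations_of_fderiv_eq_zero
    (hcrit : fderiv ℝ (fun c => euclNorm (b - K *ᵥ c) ^ 2) c = 0) :
    Kᵀ *ᵥ (b - K *ᵥ c) = 0 := by
  have hdiff : DifferentiableAt ℝ (fun c => euclNorm (b - K *ᵥ c) ^ 2) c :=
    (differentiable_euclNorm_sq _).fun_comp' c
      (K.mulVecLin.toContinuousLinearMap.differentiableAt.const_sub b)
  set g := Kᵀ *ᵥ (b - K *ᵥ c)
  have hline : HasLineDerivAt ℝ (fun c => euclNorm (b - K *ᵥ c) ^ 2) (-2 * (g ⬝ᵥ g)) c g := by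
    simp only [HasLineDerivAt, euclNorm_sub_mulVec_add_smul_sq]
    have hquad := ((((hasDerivAt_id (0 : ℝ)).const_mul 2).mul_const (g ⬝ᵥ g)).const_sub
      (euclNorm (b - K *ᵥ c) ^ 2)).add
        (((hasDerivAt_id (0 : ℝ)).pow 2).mul_const (euclNorm (K *ᵥ g) ^ 2))
    exact hquad.congr_deriv (by simp)
  have hzero : -2 * (g ⬝ᵥ g) = 0 := by
    rw [← hline.lineDeriv, hdiff.lineDeriv_eq_fderiv, hcrit, _root_.zero_apply]
  exact dotProduct_self_eq_zero.1 (by linarith)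

theorem normal_equations_iff [DecidableEq n] (hK : IsUnit (Kᵀ * K).det) :
    Kᵀ *ᵥ (b - K *ᵥ c) = 0 ↔ c = (Kᵀ * K)⁻¹ *ᵥ (Kᵀ *ᵥ b) := by
  rw [mulVec_sub, sub_eq_zero, mulVec_mulVec]
  constructor <;> intro h
  · rw [h, mulVec_mulVec, nonsing_inv_mul _ hK, one_mulVec]
  · rw [h, mulVec_mulVec, mul_nonsing_inv _ hK, one_mulVec]

theorem isUnit_det_transpose_mul_self [DecidableEq n] (hK : Function.Injective K.mulVec) :
    IsUnit (Kᵀ * K).det := by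
  rw [← isUnit_iff_isUnit_det, ← mulVec_injective_iff_isUnit]
  have hker : LinearMap.ker (Kᵀ * K).mulVecLin = ⊥ :=
    (ker_mulVecLin_transpose_mul_self K).trans (LinearMap.ker_eq_bot.2 hK)
  exact LinearMap.ker_eq_bot.1 hker

end LeastSquares

section GMRESPolynomials

theorem coeff_pPoly_succ {k : ℕ} (c : Fin k → ℝ) (j : Fin k) : (pPoly c).coeff (j + 1) = -c j := by
  simp [pPoly, coeff_one, coeff_X_pow, Fin.val_inj]

theorem pPoly_injective (k : ℕ) : Function.Injective (pPoly : (Fin k → ℝ) → ℝ[X]) := by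
  intro c c' h
  ext j
  rw [← neg_inj, ← coeff_pPoly_succ, h, coeff_pPoly_succ]

theorem isPik_pPoly {k : ℕ} (c : Fin k → ℝ) : IsPik k (pPoly c) := by
  refine ⟨(natDegree_sub_le _ _).trans (max_le (by simp) ?_), by simp [pPoly, eval_finsetSum]⟩
  exact natDegree_sum_le_of_forall_le _ _ fun j _ =>
    (natDegree_C_mul_X_pow_le _ _).trans j.isLt

theorem exists_pPoly_eq_of_isPik {k : ℕ} {p : ℝ[X]} (hp : IsPik k p) :
    ∃ c : Fin k → ℝ, pPoly c = p := by
  have hcoeff : p.coeff 0 = 1 := by rw [coeff_zero_eq_eval_zero, hp.2]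
  refine ⟨fun j => -p.coeff (j + 1), ?_⟩
  conv_rhs => rw [p.as_sum_range_C_mul_X_pow' (Nat.lt_succ_of_le hp.1), Finset.sum_range_succ',
    hcoeff, Finset.sum_range]
  simp [pPoly, add_comm]

theorem isPik_one (k : ℕ) : IsPik k 1 := ⟨by simp, by simp⟩

variable {ι : Type*} [Fintype ι] [DecidableEq ι] {A : Matrix ι ι ℝ}

theorem exists_isPik_aeval_mulVec_eq_zero (hA : IsUnit A) {q : ℝ[X]} (hq : q ≠ 0) {v : ι → ℝ}
    (hqv : aeval A q *ᵥ v = 0) : ∃ p, IsPik q.natDegree p ∧ aeval A p *ᵥ v = 0 := by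
  obtain ⟨p, hqp, hndvd⟩ := exists_eq_pow_rootMultiplicity_mul_and_not_dvd q hq 0
  rw [C_0, sub_zero] at hqp hndvd
  have hp0 : p.coeff 0 ≠ 0 := mt X_dvd_iff.2 hndvd
  have hpv : aeval A p *ᵥ v = 0 := by
    rw [hqp, map_mul, map_pow, aeval_X, ← mulVec_mulVec] at hqv
    exact mulVec_injective_of_isUnit (hA.pow _) (hqv.trans (mulVec_zero _).symm)
  refine ⟨C (p.coeff 0)⁻¹ * p, ⟨(natDegree_C_mul_le _ _).trans ?_, ?_⟩, ?_⟩
  · exact natDegree_le_of_dvd (hqp ▸ dvd_mul_left p _) hq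
  · rw [eval_mul, eval_C, ← coeff_zero_eq_eval_zero, inv_mul_cancel₀ hp0]
  · rw [map_mul, ← mulVec_mulVec, hpv, mulVec_zero]

theorem gmresVal_le_euclNorm_aeval (v : ι → ℝ) {k : ℕ} {p : ℝ[X]} (hp : IsPik k p) :
    gmresVal A k v ≤ euclNorm (aeval A p *ᵥ v) := by
  refine csInf_le ⟨0, ?_⟩ ⟨p, hp, rfl⟩
  rintro _ ⟨q, -, rfl⟩
  exact euclNorm_nonneg _

theorem gmresVal_le_Psi (k : ℕ) {v : ι → ℝ} (hv : euclNorm v = 1) : gmresVal A k v ≤ Psi A k := by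
  refine le_csSup ⟨1, ?_⟩ ⟨v, hv, rfl⟩
  rintro _ ⟨w, hw, rfl⟩
  simpa [hw] using gmresVal_le_euclNorm_aeval (A := A) w (isPik_one k)

end GMRESPolynomials

section Krylov

variable {n k : ℕ} {A : Matrix (Fin n) (Fin n) ℝ}

theorem aeval_pPoly_mulVec (c : Fin k → ℝ) (v : Fin n → ℝ) :
    aeval A (pPoly c) *ᵥ v = v - Kmat A k v *ᵥ c := by
  have hterm (j : Fin k) : aeval A (C (c j) * X ^ ((j : ℕ) + 1)) = c j • A ^ ((j : ℕ) + 1) := by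
    rw [map_mul, aeval_C, map_pow, aeval_X, Algebra.smul_def]
  simp only [pPoly, map_sub, map_sum, map_one, hterm, sub_mulVec, one_mulVec, sum_mulVec,
    smul_mulVec]
  congr 1
  ext i
  simp only [Finset.sum_apply, Pi.smul_apply, smul_eq_mul, mulVec_apply_eq_sum, Kmat, of_apply,
    mul_comm]

theorem fFun_eq (c : Fin k → ℝ) (v : Fin n → ℝ) :
    fFun A c v = euclNorm (v - Kmat A k v *ᵥ c) ^ 2 := by
  rw [fFun, aeval_pPoly_mulVec]

theorem fFun_nonneg (c : Fin k → ℝ) (v : Fin n → ℝ) : 0 ≤ fFun A c v := sq_nonneg _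

theorem exists_fFun_eq_zero_of_not_injective (hA : IsUnit A) {v : Fin n → ℝ}
    (hK : ¬ Function.Injective (Kmat A k v).mulVec) : ∃ c : Fin k → ℝ, fFun A c v = 0 := by
  obtain ⟨c, c', hcc', hne⟩ := Function.not_injective_iff.1 hK
  have hq : pPoly c - pPoly c' ≠ 0 := sub_ne_zero.2 ((pPoly_injective k).ne hne)
  have hqv : aeval A (pPoly c - pPoly c') *ᵥ v = 0 := by
    rw [map_sub, sub_mulVec, aeval_pPoly_mulVec, aeval_pPoly_mulVec, hcc', sub_self]
  have hdeg : (pPoly c - pPoly c').natDegree ≤ k :=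
    (natDegree_sub_le_of_le (isPik_pPoly c).1 (isPik_pPoly c').1).trans_eq (max_self k)
  obtain ⟨p, hp, hpv⟩ := exists_isPik_aeval_mulVec_eq_zero hA hq hqv
  obtain ⟨d, rfl⟩ := exists_pPoly_eq_of_isPik (k := k) ⟨hp.1.trans hdeg, hp.2⟩
  exact ⟨d, by rw [fFun, hpv, euclNorm_eq_zero.2 rfl, zero_pow two_ne_zero]⟩

theorem fFun_le_Psi_sq {c : Fin k → ℝ} {v : Fin n → ℝ} (hv : euclNorm v = 1)
    (hmin : ∀ c' : Fin k → ℝ, fFun A c v ≤ fFun A c' v) : fFun A c v ≤ Psi A k ^ 2 := by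
  have hres : euclNorm (aeval A (pPoly c) *ᵥ v) ≤ gmresVal A k v := by
    refine le_csInf ⟨_, 1, isPik_one k, rfl⟩ ?_
    rintro _ ⟨p, hp, rfl⟩
    obtain ⟨c', rfl⟩ := exists_pPoly_eq_of_isPik hp
    exact (sq_le_sq₀ (euclNorm_nonneg _) (euclNorm_nonneg _)).1 (hmin c')
  exact pow_le_pow_left₀ (euclNorm_nonneg _) (hres.trans (gmresVal_le_Psi k hv)) 2

theorem differentiable_Kmat_apply (i : Fin n) (j : Fin k) :
    Differentiable ℝ fun v : Fin n → ℝ => Kmat A k v i j := by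
  simp only [Kmat, of_apply, mulVec, dotProduct]
  fun_prop

theorem differentiable_fFun :
    Differentiable ℝ fun q : (Fin k → ℝ) × (Fin n → ℝ) => fFun A q.1 q.2 := by
  have hK (i : Fin n) (j : Fin k) := differentiable_Kmat_apply (A := A) i j
  have hres : Differentiable ℝ
      fun q : (Fin k → ℝ) × (Fin n → ℝ) => q.2 - Kmat A k q.2 *ᵥ q.1 := by
    refine differentiable_pi.2 fun i => ?_
    simp only [Pi.sub_apply, mulVec, dotProduct]
    fun_prop
  simp only [fFun_eq]
  exact differentiable_euclNorm_sq.fun_comp hres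

theorem differentiableAt_FFun (c : Fin k → ℝ) {v : Fin n → ℝ} (hv : v ≠ 0) :
    DifferentiableAt ℝ (fun q : (Fin k → ℝ) × (Fin n → ℝ) => FFun A q.1 q.2) (c, v) := by
  have hden : Differentiable ℝ fun q : (Fin k → ℝ) × (Fin n → ℝ) => euclNorm q.2 ^ 2 := by
    simp only [euclNorm_sq, dotProduct]
    fun_prop
  simp only [FFun, edot_self, div_eq_mul_inv]
  refine (differentiable_fFun (c, v)).fun_mul ((hden (c, v)).fun_inv ?_)
  exact (pow_pos (euclNorm_pos.2 hv) 2).ne'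

theorem differentiableAt_transpose_Kmat_mul_Kmat_apply (v : Fin n → ℝ) (i j : Fin k) :
    DifferentiableAt ℝ (fun v => ((Kmat A k v)ᵀ * Kmat A k v) i j) v := by
  have hK (i : Fin n) (j : Fin k) := differentiable_Kmat_apply (A := A) i j
  simp only [mul_apply, transpose_apply]
  fun_prop

theorem differentiableAt_gammaVec {v : Fin n → ℝ}
    (hv : IsUnit ((Kmat A k v)ᵀ * Kmat A k v).det) : DifferentiableAt ℝ (gammaVec A k) v := by
  have hK (i : Fin n) (j : Fin k) := differentiable_Kmat_apply (A := A) i j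
  refine differentiableAt_inv_mulVec (differentiableAt_transpose_Kmat_mul_Kmat_apply v)
    (differentiableAt_pi.2 fun j => ?_) hv
  simp only [mulVec, dotProduct, transpose_apply]
  fun_prop

theorem fFun_gammaVec_le {v : Fin n → ℝ} (hv : IsUnit ((Kmat A k v)ᵀ * Kmat A k v).det)
    (c : Fin k → ℝ) : fFun A (gammaVec A k v) v ≤ fFun A c v := by
  rw [fFun_eq, fFun_eq]
  exact euclNorm_sub_mulVec_sq_le ((normal_equations_iff hv).2 rfl) c

theorem FFun_eq_fFun (c : Fin k → ℝ) {v : Fin n → ℝ} (hv : euclNorm v = 1) :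
    FFun A c v = fFun A c v := by
  rw [FFun, edot_self, hv, one_pow, div_one]

theorem FFun_nonneg (c : Fin k → ℝ) (v : Fin n → ℝ) : 0 ≤ FFun A c v :=
  div_nonneg (fFun_nonneg c v) (edot_self v ▸ sq_nonneg _)

theorem FFun_le_FFun_iff {c c' : Fin k → ℝ} {v : Fin n → ℝ} (hv : v ≠ 0) :
    FFun A c v ≤ FFun A c' v ↔ fFun A c v ≤ fFun A c' v :=
  div_le_div_iff_of_pos_right (edot_self v ▸ pow_pos (euclNorm_pos.2 hv) 2)

theorem FFun_smul (c : Fin k → ℝ) {a : ℝ} (ha : a ≠ 0) (v : Fin n → ℝ) :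
    FFun A c (a • v) = FFun A c v := by
  simp only [FFun, fFun, edot_self, mulVec_smul, euclNorm_smul, mul_pow, sq_abs]
  exact mul_div_mul_left _ _ (pow_ne_zero 2 ha)

theorem fderiv_FFun_left (c : Fin k → ℝ) (v : Fin n → ℝ) :
    fderiv ℝ (fun c => FFun A c v) c = (edot v v)⁻¹ • fderiv ℝ (fun c => fFun A c v) c := by
  have hscale : (fun c => FFun A c v) = (edot v v)⁻¹ • fun c : Fin k → ℝ => fFun A c v :=
    funext fun c => div_eq_inv_mul _ _
  rw [hscale, fderiv_const_smul_field, Pi.smul_apply]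

theorem normal_equations_of_fderiv_FFun_eq_zero {c : Fin k → ℝ} {v : Fin n → ℝ} (hv : v ≠ 0)
    (hcrit : fderiv ℝ (fun c => FFun A c v) c = 0) :
    (Kmat A k v)ᵀ *ᵥ (v - Kmat A k v *ᵥ c) = 0 := by
  have hedot : (edot v v)⁻¹ ≠ 0 := by
    rw [edot_self]; exact inv_ne_zero (pow_pos (euclNorm_pos.2 hv) 2).ne'
  rw [fderiv_FFun_left, smul_eq_zero_iff_right hedot] at hcrit
  simp only [fFun_eq] at hcrit
  exact normal_equations_of_fderiv_eq_zero hcrit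

theorem fFun_le_of_fderiv_FFun_eq_zero {c : Fin k → ℝ} {v : Fin n → ℝ} (hv : v ≠ 0)
    (hcrit : fderiv ℝ (fun c => FFun A c v) c = 0) (c' : Fin k → ℝ) :
    fFun A c v ≤ fFun A c' v := by
  rw [fFun_eq, fFun_eq]
  exact euclNorm_sub_mulVec_sq_le (normal_equations_of_fderiv_FFun_eq_zero hv hcrit) c'

theorem fderiv_FFun_eq_zero_of_forall_fFun_le {c : Fin k → ℝ} {v : Fin n → ℝ} (hv : v ≠ 0)
    (hmin : ∀ c' : Fin k → ℝ, fFun A c v ≤ fFun A c' v) :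
    fderiv ℝ (fun c => FFun A c v) c = 0 :=
  IsLocalMin.fderiv_eq_zero <| .of_forall fun c' => (FFun_le_FFun_iff hv).2 (hmin c')

theorem exists_FFun_le_of_forall_unit {M : ℝ}
    (hmax : ∀ v : Fin n → ℝ, euclNorm v = 1 → ∃ c : Fin k → ℝ, FFun A c v ≤ M)
    {v : Fin n → ℝ} (hv : v ≠ 0) : ∃ c : Fin k → ℝ, FFun A c v ≤ M := by
  have hpos : 0 < euclNorm v := euclNorm_pos.2 hv
  obtain ⟨c, hc⟩ := hmax ((euclNorm v)⁻¹ • v) (by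
    rw [euclNorm_smul, abs_inv, abs_of_pos hpos, inv_mul_cancel₀ hpos.ne'])
  exact ⟨c, by rwa [FFun_smul c (inv_ne_zero hpos.ne')] at hc⟩

open Filter Topology in
theorem isLocalMax_FFun_gammaVec {v : Fin n → ℝ} (hv : v ≠ 0)
    (hK : IsUnit ((Kmat A k v)ᵀ * Kmat A k v).det)
    (hmax : ∀ w : Fin n → ℝ, w ≠ 0 → ∃ c : Fin k → ℝ, FFun A c w ≤ FFun A (gammaVec A k v) v) :
    IsLocalMax (fun w => FFun A (gammaVec A k w) w) v := by
  have hdiff : DifferentiableAt ℝ (fun w => ((Kmat A k w)ᵀ * Kmat A k w).det) v :=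
    differentiableAt_det (differentiableAt_transpose_Kmat_mul_Kmat_apply v)
  have hdet : ∀ᶠ w in 𝓝 v, ((Kmat A k w)ᵀ * Kmat A k w).det ≠ 0 :=
    hdiff.continuousAt.eventually_ne hK.ne_zero
  filter_upwards [hdet, eventually_ne_nhds hv] with w hKw hw
  obtain ⟨c, hc⟩ := hmax w hw
  exact ((FFun_le_FFun_iff hw).2 (fFun_gammaVec_le (isUnit_iff_ne_zero.2 hKw) c)).trans hc

theorem fderiv_FFun_right_eq_zero (hA : IsUnit A) {c : Fin k → ℝ} {v : Fin n → ℝ} (hv : v ≠ 0)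
    (hmin : ∀ c' : Fin k → ℝ, fFun A c v ≤ fFun A c' v)
    (hmax : ∀ w : Fin n → ℝ, w ≠ 0 → ∃ c' : Fin k → ℝ, FFun A c' w ≤ FFun A c v) :
    fderiv ℝ (fun w => FFun A c w) v = 0 := by
  obtain hzero | hpos := (fFun_nonneg (A := A) c v).eq_or_lt
  · refine IsLocalMin.fderiv_eq_zero <| .of_forall fun w => ?_
    simpa only [FFun, ← hzero, zero_div] using FFun_nonneg c w
  have hcrit : fderiv ℝ (fun c => FFun A c v) c = 0 :=
    fderiv_FFun_eq_zero_of_forall_fFun_le hv hmin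
  have hK : IsUnit ((Kmat A k v)ᵀ * Kmat A k v).det := by
    refine isUnit_det_transpose_mul_self (by_contra fun hninj => ?_)
    obtain ⟨c', hc'⟩ := exists_fFun_eq_zero_of_not_injective hA hninj
    exact (hpos.trans_le (hmin c')).ne' hc'
  obtain rfl : c = gammaVec A k v :=
    (normal_equations_iff hK).1 (normal_equations_of_fderiv_FFun_eq_zero hv hcrit)
  rw [← fderiv_envelope (Φ := fun q => FFun A q.1 q.2) (differentiableAt_FFun _ hv)
    (differentiableAt_gammaVec hK) hcrit]
  exact (isLocalMax_FFun_gammaVec hv hK hmax).fderiv_eq_zero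

end Krylov

theorem stationary_points_and_worst_case_general {n : ℕ} (A : Matrix (Fin n) (Fin n) ℝ)
    (hA : IsUnit A) (k : ℕ) :
    (∀ (ch : Fin k → ℝ) (vh : Fin n → ℝ), euclNorm vh = 1 →
      fderiv ℝ (fun c : Fin k → ℝ => FFun A c vh) ch = 0 →
      (∀ c : Fin k → ℝ, fFun A ch vh ≤ fFun A c vh) ∧ FFun A ch vh ≤ Psi A k ^ 2) ∧
    (∀ (ct : Fin k → ℝ) (vt : Fin n → ℝ), euclNorm vt = 1 →
      (∀ c : Fin k → ℝ, fFun A ct vt ≤ fFun A c vt) →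
      (∀ v : Fin n → ℝ, euclNorm v = 1 → ∃ c : Fin k → ℝ, fFun A c v ≤ fFun A ct vt) →
      (fderiv ℝ (fun c : Fin k → ℝ => FFun A c vt) ct = 0 ∧
       fderiv ℝ (fun v : Fin n → ℝ => FFun A ct v) vt = 0) ∧
      (∀ (ch : Fin k → ℝ) (vh : Fin n → ℝ), euclNorm vh = 1 →
        fderiv ℝ (fun c : Fin k → ℝ => FFun A c vh) ch = 0 →
        FFun A ch vh ≤ FFun A ct vt)) := by
  have gmres {ch : Fin k → ℝ} {vh : Fin n → ℝ} (hvh : euclNorm vh = 1)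
      (hcrit : fderiv ℝ (fun c : Fin k → ℝ => FFun A c vh) ch = 0) (c : Fin k → ℝ) :
      fFun A ch vh ≤ fFun A c vh :=
    fFun_le_of_fderiv_FFun_eq_zero (ne_zero_of_euclNorm_eq_one hvh) hcrit c
  refine ⟨fun ch vh hvh hcrit => ⟨gmres hvh hcrit, ?_⟩, fun ct vt hvt hmin hmax => ?_⟩
  · exact FFun_eq_fFun ch hvh ▸ fFun_le_Psi_sq hvh (gmres hvh hcrit)
  have hmax' : ∀ v : Fin n → ℝ, euclNorm v = 1 → ∃ c : Fin k → ℝ, FFun A c v ≤ FFun A ct vt := by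
    intro v hv
    simpa only [FFun_eq_fFun _ hv, FFun_eq_fFun _ hvt] using hmax v hv
  have hvt0 := ne_zero_of_euclNorm_eq_one hvt
  refine ⟨⟨fderiv_FFun_eq_zero_of_forall_fFun_le hvt0 hmin, fderiv_FFun_right_eq_zero hA hvt0 hmin
    fun v hv => exists_FFun_le_of_forall_unit hmax' hv⟩, fun ch vh hvh hcrit => ?_⟩
  obtain ⟨c, hc⟩ := hmax' vh hvh
  exact ((FFun_le_FFun_iff (ne_zero_of_euclNorm_eq_one hvh)).2 (gmres hvh hcrit c)).trans hc

/-- (i) If `(ĉ, v̂)` with `‖v̂‖ = 1` and `d(A,v̂) ≥ k` is a stationary point of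
`F(c,v) = ‖p(A;c)v‖²/(vᵀv)`, then `p(·;ĉ)` is the `k`-th GMRES polynomial of `A` and `v̂`
(i.e. `ĉ` minimizes `c ↦ f(c,v̂)`), and `F(ĉ,v̂) ≤ Ψ_k(A)²`. (ii) Consequently, a point
`(c̃, ṽ)` with `‖ṽ‖ = 1` solving the worst-case GMRES problem is a stationary point of `F`
at which the maximal value of `F` among all stationary points is attained. -/
theorem stationary_points_and_worst_case {n : ℕ} (A : Matrix (Fin n) (Fin n) ℝ)
    (hA : IsUnit A) (k : ℕ) (hk1 : 1 ≤ k) (hk2 : k < dA A) :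
    (∀ (ch : Fin k → ℝ) (vh : Fin n → ℝ), euclNorm vh = 1 → k ≤ dAb A vh →
      fderiv ℝ (fun c : Fin k → ℝ => FFun A c vh) ch = 0 →
      fderiv ℝ (fun v : Fin n → ℝ => FFun A ch v) vh = 0 →
      (∀ c : Fin k → ℝ, fFun A ch vh ≤ fFun A c vh) ∧ FFun A ch vh ≤ Psi A k ^ 2) ∧
    (∀ (ct : Fin k → ℝ) (vt : Fin n → ℝ), euclNorm vt = 1 →
      (∀ c : Fin k → ℝ, fFun A ct vt ≤ fFun A c vt) →
      (∀ v : Fin n → ℝ, euclNorm v = 1 → ∃ c : Fin k → ℝ, fFun A c v ≤ fFun A ct vt) →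
      (fderiv ℝ (fun c : Fin k → ℝ => FFun A c vt) ct = 0 ∧
       fderiv ℝ (fun v : Fin n → ℝ => FFun A ct v) vt = 0) ∧
      (∀ (ch : Fin k → ℝ) (vh : Fin n → ℝ), euclNorm vh = 1 → k ≤ dAb A vh →
        fderiv ℝ (fun c : Fin k → ℝ => FFun A c vh) ch = 0 →
        fderiv ℝ (fun v : Fin n → ℝ => FFun A ch v) vh = 0 →
        FFun A ch vh ≤ FFun A ct vt)) := by
  obtain ⟨gmres, worst⟩ := stationary_points_and_worst_case_general A hA k
  exact ⟨fun ch vh hvh _ hcrit _ => gmres ch vh hvh hcrit, fun ct vt hvt hmin hmax =>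
    (worst ct vt hvt hmin hmax).imp_right fun hle ch vh hvh _ hcrit _ => hle ch vh hvh hcrit⟩
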